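/- Let M be a von Neumann algebra with a faithful normal semifinite trace τ, let m_τ = {a ∈ M : τ(|a|) < ∞} be the definition ideal of τ, and let Δ : M → M be a 2-local derivation. Then for every x ∈ M and every y ∈ m_τ one has τ(Δ(x)y) = −τ(xΔ(y)). -/

import Mathlib

open scoped ENNReal NNReal

variable {H : Type*} [NormedAddCommGroup H] [InnerProductSpace ℂ H] [CompleteSpace H]

/-- Scalar multiplication is inherited by a von Neumann algebra from `B(H)`. -/
instance : SMulMemClass (VonNeumannAlgebra H) ℂ (H →L[ℂ] H) where
  smul_mem {M} c _x hx := M.toStarSubalgebra.smul_mem hx c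

/-- A map `D : M → M` is a derivation: it is `ℂ`-linear and satisfies the Leibniz rule. -/
def IsDerivation (M : VonNeumannAlgebra H) (D : M → M) : Prop :=
  (∀ x y : M, D (x + y) = D x + D y) ∧
  (∀ (c : ℂ) (x : M), D (c • x) = c • D x) ∧
  (∀ x y : M, D (x * y) = D x * y + x * D y)

/-- A map `Δ : M → M` (not assumed linear) is a 2-local derivation if for every pair `x, y`
there is a derivation agreeing with `Δ` at `x` and at `y`. -/
def Is2LocalDerivation (M : VonNeumannAlgebra H) (Δ : M → M) : Prop :=
  ∀ x y : M, ∃ D : M → M, IsDerivation M D ∧ Δ x = D x ∧ Δ y = D y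

/-- An element of a von Neumann algebra is positive if it is a positive operator on `H`. -/
def IsPos (M : VonNeumannAlgebra H) (x : M) : Prop :=
  ContinuousLinearMap.IsPositive (x : H →L[ℂ] H)

/-- The operator (Loewner) order on a von Neumann algebra: `x ≤ y` iff `y - x` is positive. -/
def OpLE (M : VonNeumannAlgebra H) (x y : M) : Prop :=
  ContinuousLinearMap.IsPositive ((y : H →L[ℂ] H) - (x : H →L[ℂ] H))

/-- A faithful normal semifinite trace on a von Neumann algebra `M`: a map on `M` which, on the
positive cone, is additive and positively homogeneous, satisfies `τ(xx⋆) = τ(x⋆x)`, is faithful,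
normal (commutes with suprema of bounded monotone increasing nets of positive elements) and
semifinite. -/
structure FNSTrace (M : VonNeumannAlgebra H) : Type _ where
  τ : M → ℝ≥0∞
  additive : ∀ x y : M, IsPos M x → IsPos M y → τ (x + y) = τ x + τ y
  pos_smul : ∀ (c : ℝ≥0) (x : M), IsPos M x → τ ((c : ℂ) • x) = c * τ x
  tracial : ∀ x : M, τ (x * star x) = τ (star x * x)
  faithful : ∀ x : M, IsPos M x → τ x = 0 → x = 0
  normal : ∀ {ι : Type} [Nonempty ι] [Preorder ι] [IsDirected ι (· ≤ ·)]
      (f : ι → M) (s : M), (∀ i, IsPos M (f i)) →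
      (∀ i j, i ≤ j → OpLE M (f i) (f j)) →
      (∀ i, OpLE M (f i) s) → (∀ u : M, (∀ i, OpLE M (f i) u) → OpLE M s u) →
      τ s = ⨆ i, τ (f i)
  semifinite : ∀ x : M, IsPos M x → x ≠ 0 →
      ∃ y : M, IsPos M y ∧ y ≠ 0 ∧ OpLE M y x ∧ τ y < ⊤

/-- `a` belongs to the definition ideal `m_τ = {a ∈ M : τ(|a|) < ∞}`, where `|a|` is the unique
positive square root of `a⋆a`. -/
def MemIdeal (M : VonNeumannAlgebra H) (τ : M → ℝ≥0∞) (a : M) : Prop :=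
  ∃ b : M, IsPos M b ∧ b * b = star a * a ∧ τ b < ⊤

/-- `σ : M → ℂ` is the extension of the trace `τ` to a linear functional on the definition
ideal `m_τ`, satisfying the tracial identity `σ(xy) = σ(yx)` for `x ∈ M`, `y ∈ m_τ`. -/
def IsTraceExtension (M : VonNeumannAlgebra H) (T : FNSTrace M) (σ : M → ℂ) : Prop :=
  (∀ x : M, IsPos M x → T.τ x < ⊤ → σ x = ((T.τ x).toReal : ℂ)) ∧
  (∀ x y : M, MemIdeal M T.τ x → MemIdeal M T.τ y → σ (x + y) = σ x + σ y) ∧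
  (∀ (c : ℂ) (x : M), MemIdeal M T.τ x → σ (c • x) = c * σ x) ∧
  (∀ x y : M, MemIdeal M T.τ y → σ (x * y) = σ (y * x))

/-!
A derivation `D` and its trace are controlled on unitaries: if `u` is unitary and commutes with
`k ∈ m_τ`, then `τ(u⁻ⁿ D(uⁿ) k) = n τ(u⁻¹ D(u) k)` is bounded in `n`, so `τ(D(u) k) = 0`, and hence
`τ(D(b) k) = 0` for every `b` commuting with `k` and `k⋆`. If `k ∈ m_τ` is moreover a selfadjoint
unit for `b`, then `D b = D(b) k + b D(k)`, so that `τ(D b) = 0`. The soft thresholds `(y - ε)₊` of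
a positive `y ∈ m_τ` have such units, and satisfy `τ(|D((y - ε)₊)|) ≤ ‖D‖ τ(y)`, because
`τ(u D(p)) = -τ(D(u) p)` for `p = (y - ε)₊` and `‖u‖ ≤ 1`. Lower semicontinuity of the trace carries
this bound to the limit `ε → 0`; thus `D` maps `m_τ` to itself and `τ ∘ D = 0` there. Applying this
to `xy` gives the identity for derivations, and 2-locality reduces the theorem to that case.
Derivations are bounded because their real and imaginary parts are dissipative on the selfadjoint
part; no implementation of `D` as a commutator is needed.
-/

open Filter Topology
open scoped ComplexStarModule

/-! ### Functional calculus in C⋆-algebras -/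

theorem star_mul_add_star_mul_le {R : Type*} [NonUnitalRing R] [StarRing R] [PartialOrder R]
    [StarOrderedRing R] (a b : R) : star a * b + star b * a ≤ star a * a + star b * b := by
  have h : 0 ≤ star (a - b) * (a - b) := star_mul_self_nonneg _
  rw [← sub_nonneg]
  convert h using 1
  rw [star_sub, sub_mul, mul_sub, mul_sub]
  abel

section FunctionalCalculus

variable {A : Type*} [CStarAlgebra A]

/-- The soft threshold `(b - ε)₊` of a self-adjoint element `b` at height `ε`. -/
noncomputable def softThreshold (ε : ℝ) (b : A) : A :=
  cfc (fun t : ℝ => max (t - ε) 0) b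

/-- The regularised inverse `(|b| + ε)⁻¹` of a self-adjoint element `b`. -/
noncomputable def regularizedInverse (ε : ℝ) (b : A) : A :=
  cfc (fun t : ℝ => (|t| + ε)⁻¹) b

theorem isSelfAdjoint_regularizedInverse (ε : ℝ) (b : A) :
    IsSelfAdjoint (regularizedInverse ε b) :=
  cfc_predicate _ b

theorem continuous_inv_abs_add {ε : ℝ} (hε : 0 < ε) : Continuous fun t : ℝ => (|t| + ε)⁻¹ :=
  (continuous_abs.add_const ε).inv₀ fun t => (add_pos_of_nonneg_of_pos (abs_nonneg t) hε).ne'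

theorem mul_regularizedInverse {ε : ℝ} (hε : 0 < ε) {b : A} (hb : IsSelfAdjoint b) :
    b * regularizedInverse ε b = cfc (fun t : ℝ => t * (|t| + ε)⁻¹) b := by
  have hc := (continuous_inv_abs_add hε).continuousOn (s := spectrum ℝ b)
  rw [cfc_mul _ _ b, cfc_id' ℝ b, regularizedInverse]

theorem commute_regularizedInverse {ε : ℝ} {b : A} (hb : IsSelfAdjoint b) :
    Commute (regularizedInverse ε b) b := by
  rw [regularizedInverse]
  conv_rhs => rw [← cfc_id' ℝ b]
  exact cfc_commute_cfc _ _ b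

theorem norm_mul_regularizedInverse_le {ε : ℝ} (hε : 0 < ε) {b : A} (hb : IsSelfAdjoint b) :
    ‖b * regularizedInverse ε b‖ ≤ 1 := by
  rw [mul_regularizedInverse hε hb]
  refine norm_cfc_le zero_le_one fun t _ => ?_
  have ht : 0 < |t| + ε := by positivity
  rw [norm_mul, norm_inv, Real.norm_eq_abs, Real.norm_of_nonneg ht.le, ← div_eq_mul_inv,
    div_le_one ht]
  exact le_add_of_nonneg_right hε.le

variable [PartialOrder A] [StarOrderedRing A]

theorem star_abs_mul_mul_abs_mul (z f : A) :
    star (CFC.abs z * f) * (CFC.abs z * f) = star (z * f) * (z * f) := by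
  simp only [star_mul, (CFC.abs_nonneg z).isSelfAdjoint.star_eq, mul_assoc]
  rw [← mul_assoc (CFC.abs z), CFC.abs_mul_abs, mul_assoc]

theorem norm_mul_eq_norm_abs_mul (z f : A) : ‖z * f‖ = ‖CFC.abs z * f‖ := by
  have h' := congrArg norm (star_abs_mul_mul_abs_mul z f).symm
  rw [CStarRing.norm_star_mul_self, CStarRing.norm_star_mul_self] at h'
  exact (mul_self_inj (norm_nonneg _) (norm_nonneg _)).1 h'

theorem abs_mul_le (x z : A) : CFC.abs (x * z) ≤ ‖x‖ • CFC.abs z := by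
  have hsq : star (x * z) * (x * z) ≤ ‖x‖ ^ 2 • (star z * z) := by
    have h := star_left_conjugate_le_conjugate
      (CStarAlgebra.star_mul_le_algebraMap_norm_sq (a := x)) z
    simpa [mul_assoc, Algebra.algebraMap_eq_smul_one] using h
  have hz : 0 ≤ ‖x‖ • CFC.abs z := smul_nonneg (norm_nonneg x) (CFC.abs_nonneg z)
  calc CFC.abs (x * z) ≤ CFC.sqrt (‖x‖ ^ 2 • (star z * z)) := CFC.sqrt_le_sqrt _ _ hsq
    _ = ‖x‖ • CFC.abs z := CFC.sqrt_unique
        (by rw [smul_mul_smul_comm, CFC.abs_mul_abs, sq]) hz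

theorem softThreshold_nonneg (ε : ℝ) (b : A) : 0 ≤ softThreshold ε b :=
  cfc_nonneg fun _ _ => le_max_right _ _

theorem softThreshold_antitone (b : A) : Antitone fun ε => softThreshold ε b :=
  fun _ _ h => cfc_mono fun _ _ => max_le_max_right 0 (sub_le_sub_left h _)

theorem softThreshold_le {ε : ℝ} (hε : 0 ≤ ε) {b : A} (hb : 0 ≤ b) : softThreshold ε b ≤ b := by
  conv_rhs => rw [← cfc_id' ℝ b]
  refine cfc_mono fun t ht => max_le (sub_le_self t hε) (spectrum_nonneg_of_nonneg hb ht)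

theorem norm_softThreshold_sub_le {ε : ℝ} (hε : 0 ≤ ε) {b : A} (hb : 0 ≤ b) :
    ‖softThreshold ε b - b‖ ≤ ε := by
  have h : softThreshold ε b - b = cfc (fun t : ℝ => max (t - ε) 0 - t) b := by
    rw [cfc_sub _ _, cfc_id' ℝ b, softThreshold]
  rw [h]
  refine norm_cfc_le hε fun t ht => ?_
  have ht' := spectrum_nonneg_of_nonneg hb ht
  rw [Real.norm_eq_abs, abs_le]
  rcases max_cases (t - ε) 0 with ⟨h, _⟩ | ⟨h, _⟩ <;> rw [h] <;> constructor <;> linarith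

theorem tendsto_softThreshold {b : A} (hb : 0 ≤ b) :
    Tendsto (fun n : ℕ => softThreshold (1 / (n + 1)) b) atTop (𝓝 b) := by
  rw [tendsto_iff_norm_sub_tendsto_zero]
  exact squeeze_zero (fun _ => norm_nonneg _)
    (fun n => norm_softThreshold_sub_le (by positivity) hb) tendsto_one_div_add_atTop_nhds_zero_nat

theorem norm_mul_mul_regularizedInverse_sub_le {ε : ℝ} (hε : 0 < ε) {b : A} (hb : 0 ≤ b) :
    ‖b * (b * regularizedInverse ε b) - b‖ ≤ ε := by
  have hc := (continuous_inv_abs_add hε).continuousOn (s := spectrum ℝ b)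
  have h : b * (b * regularizedInverse ε b) - b =
      cfc (fun t : ℝ => t * (t * (|t| + ε)⁻¹) - t) b := by
    rw [cfc_sub _ _ b, cfc_mul _ _ b, cfc_id' ℝ b, mul_regularizedInverse hε hb.isSelfAdjoint]
  rw [h]
  refine norm_cfc_le hε.le fun t ht => ?_
  have ht' : 0 ≤ t := spectrum_nonneg_of_nonneg hb ht
  have hpos : 0 < t + ε := by positivity
  have : t * (t * (t + ε)⁻¹) - t = -(t / (t + ε) * ε) := by field_simp; ring
  rw [abs_of_nonneg ht', this, norm_neg, Real.norm_of_nonneg (by positivity)]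
  exact mul_le_of_le_one_left hε.le ((div_le_one hpos).2 (by linarith))

theorem softThreshold_le_mul_mul_regularizedInverse {ε : ℝ} (hε : 0 < ε) {b : A} (hb : 0 ≤ b) :
    softThreshold ε b ≤ b * (b * regularizedInverse ε b) := by
  have hc := (continuous_inv_abs_add hε).continuousOn (s := spectrum ℝ b)
  have h : b * (b * regularizedInverse ε b) = cfc (fun t : ℝ => t * (t * (|t| + ε)⁻¹)) b := by
    rw [cfc_mul _ _ b, cfc_id' ℝ b, mul_regularizedInverse hε hb.isSelfAdjoint]
  rw [h]
  refine cfc_mono fun t ht => ?_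
  have ht' : 0 ≤ t := spectrum_nonneg_of_nonneg hb ht
  rw [abs_of_nonneg ht', ← mul_assoc, ← div_eq_mul_inv]
  refine max_le ?_ (by positivity)
  rw [le_div_iff₀ (by positivity)]
  nlinarith [sq_nonneg ε]

theorem exists_softThreshold_abs_le_mul (z : A) {ε : ℝ} (hε : 0 < ε) :
    ∃ u : A, ‖u‖ ≤ 1 ∧ softThreshold ε (CFC.abs z) ≤ u * z := by
  set b := CFC.abs z with hb
  set g := regularizedInverse ε b
  have hb0 : 0 ≤ b := CFC.abs_nonneg z
  refine ⟨star (z * g), ?_, ?_⟩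
  · rw [norm_star, norm_mul_eq_norm_abs_mul]
    exact norm_mul_regularizedInverse_le hε hb0.isSelfAdjoint
  · have hg : star (z * g) * z = b * (b * g) := by
      rw [star_mul, (isSelfAdjoint_regularizedInverse ε b).star_eq, mul_assoc,
        ← CFC.abs_mul_abs z, ← hb, ← mul_assoc b b]
      exact (((commute_regularizedInverse hb0.isSelfAdjoint).mul_right
        (commute_regularizedInverse hb0.isSelfAdjoint))).eq
    exact hg ▸ softThreshold_le_mul_mul_regularizedInverse hε hb0

/-- The factors are `|z|^{1/2}` and the limit of `z (|z|^{1/2} + ε)⁻¹`. -/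
theorem exists_mul_eq_star_mul_self_eq_abs (z : A) :
    ∃ v c : A, z = v * c ∧ IsSelfAdjoint c ∧ star v * v = CFC.abs z ∧ c * c = CFC.abs z := by
  set c := CFC.sqrt (CFC.abs z)
  have hc : 0 ≤ c := CFC.sqrt_nonneg _
  have hcc : c * c = CFC.abs z := CFC.sqrt_mul_sqrt_self _ (CFC.abs_nonneg z)
  set g : ℕ → A := fun n => regularizedInverse (1 / (n + 1)) c
  have hg : Tendsto (fun n => c * (c * g n)) atTop (𝓝 c) := by
    rw [tendsto_iff_norm_sub_tendsto_zero]
    exact squeeze_zero (fun _ => norm_nonneg _)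
      (fun n => norm_mul_mul_regularizedInverse_sub_le (by positivity) hc)
      tendsto_one_div_add_atTop_nhds_zero_nat
  have hcauchy : CauchySeq fun n => z * g n := by
    refine Metric.cauchySeq_iff.2 fun δ hδ => ?_
    obtain ⟨N, hN⟩ := Metric.cauchySeq_iff.1 hg.cauchySeq δ hδ
    refine ⟨N, fun m hm n hn => ?_⟩
    have := hN m hm n hn
    rwa [dist_eq_norm, ← mul_sub, ← mul_sub, ← mul_assoc, hcc, ← norm_mul_eq_norm_abs_mul,
      mul_sub, ← dist_eq_norm] at this
  obtain ⟨v, hv⟩ := cauchySeq_tendsto_of_complete hcauchy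
  refine ⟨v, c, ?_, hc.isSelfAdjoint, ?_, hcc⟩
  · refine tendsto_nhds_unique ?_ (hv.mul_const c)
    have h : Tendsto (fun n => c * (c * g n) * c - c * c) atTop (𝓝 0) := by
      simpa using (hg.mul_const c).sub_const (c * c)
    rw [tendsto_iff_norm_sub_tendsto_zero]
    refine h.norm.congr' (.of_forall fun n => ?_) |>.trans_eq (by rw [norm_zero])
    calc ‖c * (c * g n) * c - c * c‖ = ‖CFC.abs z * (g n * c - 1)‖ := by rw [← hcc]; noncomm_ring
      _ = ‖z * g n * c - z‖ := by rw [← norm_mul_eq_norm_abs_mul, mul_sub, mul_one, mul_assoc]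
  · refine tendsto_nhds_unique (hv.star.mul hv) ?_
    have h : Tendsto (fun n => star (c * (c * g n)) * (c * (c * g n))) atTop (𝓝 (star c * c)) :=
      hg.star.mul hg
    rw [hc.isSelfAdjoint.star_eq, hcc] at h
    refine h.congr fun n => ?_
    rw [← mul_assoc c c, hcc, star_abs_mul_mul_abs_mul]

theorem exists_softThreshold_le_conj {ε : ℝ} (hε : 0 < ε) {a b : A} (ha : IsSelfAdjoint a)
    (hb : IsSelfAdjoint b) (hab : ‖a - b‖ ≤ ε) :
    ∃ g : A, ‖g‖ ≤ 1 ∧ softThreshold (2 * ε) b ≤ g * a * star g := by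
  let f : ℝ → ℝ := fun t => √(max (t - 2 * ε) 0 / max (t - ε) ε)
  have hm (t : ℝ) : 0 < max (t - ε) ε := lt_max_of_lt_right hε
  have hf : Continuous f := by
    refine Continuous.sqrt (Continuous.div ?_ ?_ fun t => (hm t).ne') <;> fun_prop
  have hsq (t : ℝ) : f t * (t - ε) * f t = max (t - 2 * ε) 0 := by
    rw [mul_right_comm, Real.mul_self_sqrt (div_nonneg (le_max_right _ _) (hm t).le)]
    rcases le_total (t - 2 * ε) 0 with h | h
    · simp [max_eq_right h]
    · rw [max_eq_left (by linarith : ε ≤ t - ε), div_mul_cancel₀ _ (by linarith)]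
  have hg : IsSelfAdjoint (cfc f b) := cfc_predicate f b
  refine ⟨cfc f b, norm_cfc_le zero_le_one fun t _ => ?_, ?_⟩
  · rw [Real.norm_of_nonneg (Real.sqrt_nonneg _), Real.sqrt_le_one]
    rw [div_le_one (hm t)]
    exact max_le_max (by linarith) hε.le
  · have hle : b - algebraMap ℝ A ε ≤ a := by
      rw [sub_le_iff_le_add, ← sub_le_iff_le_add']
      rw [← norm_sub_rev] at hab
      exact (hb.sub ha).le_algebraMap_norm_self.trans (algebraMap_mono A hab)
    calc softThreshold (2 * ε) b = cfc f b * (b - algebraMap ℝ A ε) * cfc f b := by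
          rw [softThreshold, ← cfc_congr fun t _ => hsq t, cfc_mul _ _ b, cfc_mul _ _ b,
            cfc_sub _ _ b, cfc_id' ℝ b, cfc_const ε b]
      _ ≤ cfc f b * a * star (cfc f b) := by
          simpa only [hg.star_eq] using star_right_conjugate_le_conjugate hle (cfc f b)

theorem exists_softThreshold_eq_mul_self {ε : ℝ} (hε : 0 < ε) {y : A} (hy : 0 ≤ y) :
    ∃ s k : A, IsSelfAdjoint s ∧ 0 ≤ k ∧ k ≤ ε⁻¹ • y ∧ s * k = s ∧ s * s = softThreshold ε y := by
  refine ⟨cfc (fun t : ℝ => √(max (t - ε) 0)) y, cfc (fun t : ℝ => min 1 (ε⁻¹ * t)) y,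
    cfc_predicate _ y, cfc_nonneg fun t ht => ?_, ?_, ?_, ?_⟩
  · have := spectrum_nonneg_of_nonneg hy ht
    positivity
  · conv_rhs => rw [← cfc_id' ℝ y, ← cfc_smul _ _ y]
    exact cfc_mono fun t _ => min_le_right _ _
  · rw [← cfc_mul _ _ y]
    refine cfc_congr fun t _ => ?_
    rcases le_total t ε with h | h
    · simp [max_eq_right (sub_nonpos.2 h)]
    · have : 1 ≤ ε⁻¹ * t := by rwa [← div_eq_inv_mul, one_le_div hε]
      simp [min_eq_left this]
  · rw [← cfc_mul _ _ y, softThreshold]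
    exact cfc_congr fun t _ => Real.mul_self_sqrt (le_max_right _ _)

end FunctionalCalculus

/-! ### Lower semicontinuous traces and their definition ideals -/

section Trace

variable {A : Type*} [CStarAlgebra A] [PartialOrder A] [StarOrderedRing A] {τ : A → ℝ≥0∞}

/-- A trace on the positive cone of a C⋆-algebra, possibly taking the value `∞`, that is lower
semicontinuous; values of `τ` outside the positive cone are irrelevant. Lower semicontinuity is
encoded as compatibility with norm limits of increasing sequences, which is what the normality of
a trace on a von Neumann algebra provides. -/
structure IsLscTrace (τ : A → ℝ≥0∞) : Prop where
  add {a b : A} : 0 ≤ a → 0 ≤ b → τ (a + b) = τ a + τ b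
  smul (c : ℝ≥0) {a : A} : 0 ≤ a → τ (c • a) = c * τ a
  mul_star_self (x : A) : τ (x * star x) = τ (star x * x)
  eq_iSup_of_tendsto {f : ℕ → A} {a : A} : (∀ n, 0 ≤ f n) → Monotone f →
    Tendsto f atTop (𝓝 a) → τ a = ⨆ n, τ (f n)

/-- The trace norm `τ(|z|)` attached to a trace `τ`. -/
noncomputable def traceNorm (τ : A → ℝ≥0∞) (z : A) : ℝ≥0∞ :=
  τ (CFC.abs z)

theorem traceNorm_of_nonneg (τ : A → ℝ≥0∞) {a : A} (ha : 0 ≤ a) : traceNorm τ a = τ a := by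
  rw [traceNorm, CFC.abs_of_nonneg a ha]

namespace IsLscTrace

theorem mono (hτ : IsLscTrace τ) {a b : A} (ha : 0 ≤ a) (hab : a ≤ b) : τ a ≤ τ b := by
  rw [← add_sub_cancel a b, hτ.add ha (sub_nonneg.2 hab)]
  exact le_self_add

theorem conj_le (hτ : IsLscTrace τ) {x a : A} (hx : ‖x‖ ≤ 1) (ha : 0 ≤ a) :
    τ (x * a * star x) ≤ τ a := by
  set r := CFC.sqrt a
  have hr : star r = r := (CFC.sqrt_nonneg a).isSelfAdjoint.star_eq
  have hrr : r * r = a := CFC.sqrt_mul_sqrt_self a ha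
  have hxx : star x * x ≤ 1 := CStarAlgebra.star_mul_le_algebraMap_norm_sq.trans <| by
    simpa using algebraMap_mono A (pow_le_one₀ (norm_nonneg x) hx)
  calc τ (x * a * star x) = τ (x * r * star (x * r)) := by
        rw [star_mul, hr, ← hrr]; simp only [mul_assoc]
    _ = τ (star r * (star x * x) * r) := by
        rw [hτ.mul_star_self, star_mul]; simp only [mul_assoc]
    _ ≤ τ (star r * 1 * r) := hτ.mono
        (by simpa only [star_mul, mul_assoc] using star_mul_self_nonneg (x * r))
        (star_left_conjugate_le_conjugate hxx r)
    _ = τ a := by rw [mul_one, hr, hrr]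

theorem eq_iSup_softThreshold (hτ : IsLscTrace τ) {a : A} (ha : 0 ≤ a) :
    τ a = ⨆ n : ℕ, τ (softThreshold (1 / (n + 1)) a) :=
  hτ.eq_iSup_of_tendsto (fun _ => softThreshold_nonneg _ _)
    ((softThreshold_antitone a).comp fun _ _ h => Nat.one_div_le_one_div h)
    (tendsto_softThreshold ha)

theorem le_of_softThreshold_le (hτ : IsLscTrace τ) {a : A} (ha : 0 ≤ a) {C : ℝ≥0∞}
    (h : ∀ ε > 0, τ (softThreshold ε a) ≤ C) : τ a ≤ C := by
  rw [hτ.eq_iSup_softThreshold ha]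
  exact iSup_le fun n => h _ Nat.one_div_pos_of_nat

theorem tendsto_sub_softThreshold (hτ : IsLscTrace τ) {a : A} (ha : 0 ≤ a) (ha' : τ a < ⊤) :
    Tendsto (fun n : ℕ => τ (a - softThreshold (1 / (n + 1)) a)) atTop (𝓝 0) := by
  have hmono : Monotone fun n : ℕ => τ (softThreshold (1 / (n + 1)) a) := fun m n h =>
    hτ.mono (softThreshold_nonneg _ _) (softThreshold_antitone a (Nat.one_div_le_one_div h))
  have hle (n : ℕ) : softThreshold (1 / (n + 1)) a ≤ a := softThreshold_le (by positivity) ha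
  have hsub (n : ℕ) : τ (a - softThreshold (1 / (n + 1)) a) =
      τ a - τ (softThreshold (1 / (n + 1)) a) := by
    refine ENNReal.eq_sub_of_add_eq
      ((hτ.mono (softThreshold_nonneg _ _) (hle n)).trans_lt ha').ne ?_
    rw [← hτ.add (sub_nonneg.2 (hle n)) (softThreshold_nonneg _ _), sub_add_cancel]
  simp only [hsub]
  have h := ENNReal.Tendsto.sub (tendsto_const_nhds (x := τ a)) (tendsto_atTop_iSup hmono)
    (Or.inl ha'.ne)
  rwa [← hτ.eq_iSup_softThreshold ha, tsub_self] at h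

theorem le_of_tendsto (hτ : IsLscTrace τ) {f : ℕ → A} {a : A} {C : ℝ≥0∞}
    (hf : ∀ n, 0 ≤ f n) (hC : ∀ n, τ (f n) ≤ C) (h : Tendsto f atTop (𝓝 a)) : τ a ≤ C := by
  have ha : 0 ≤ a := ge_of_tendsto' h hf
  refine hτ.le_of_softThreshold_le ha fun ε hε => ?_
  obtain ⟨n, hn⟩ := ((tendsto_iff_norm_sub_tendsto_zero.1 h).eventually_le_const
    (half_pos hε)).exists
  obtain ⟨g, hg, hle⟩ :=
    exists_softThreshold_le_conj (half_pos hε) (hf n).isSelfAdjoint ha.isSelfAdjoint hn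
  rw [mul_div_cancel₀ ε two_ne_zero] at hle
  exact (hτ.mono (softThreshold_nonneg _ _) hle).trans ((hτ.conj_le hg (hf n)).trans (hC n))

theorem traceNorm_le_of_tendsto (hτ : IsLscTrace τ) {f : ℕ → A} {z : A} {C : ℝ≥0∞}
    (hC : ∀ n, traceNorm τ (f n) ≤ C) (h : Tendsto f atTop (𝓝 z)) : traceNorm τ z ≤ C :=
  hτ.le_of_tendsto (fun n => CFC.abs_nonneg (f n)) hC ((CFC.continuous_abs.tendsto z).comp h)

theorem traceNorm_le_of_forall_mul_le (hτ : IsLscTrace τ) {z : A} {C : ℝ≥0∞}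
    (h : ∀ u : A, ‖u‖ ≤ 1 → 0 ≤ u * z → τ (u * z) ≤ C) : traceNorm τ z ≤ C := by
  refine hτ.le_of_softThreshold_le (CFC.abs_nonneg z) fun ε hε => ?_
  obtain ⟨u, hu, hle⟩ := exists_softThreshold_abs_le_mul z hε
  have h0 := softThreshold_nonneg ε (CFC.abs z)
  exact (hτ.mono h0 hle).trans (h u hu (h0.trans hle))

theorem two_mul_le_of_add_self_le (hτ : IsLscTrace τ) {a q : A} (ha : 0 ≤ a) (h : a + a ≤ q) :
    2 * τ a ≤ τ q := by
  rw [two_mul, ← hτ.add ha ha]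
  exact hτ.mono (add_nonneg ha ha) h

theorem traceNorm_mul_le_nnnorm_mul (hτ : IsLscTrace τ) (x z : A) :
    traceNorm τ (x * z) ≤ ‖x‖₊ * traceNorm τ z := by
  rw [traceNorm, traceNorm, ← hτ.smul _ (CFC.abs_nonneg z)]
  exact hτ.mono (CFC.abs_nonneg _) (abs_mul_le x z)

theorem traceNorm_mul_le (hτ : IsLscTrace τ) {a b : A} {C : ℝ≥0∞} (ha : τ (a * star a) ≤ C)
    (hb : τ (star b * b) ≤ C) : traceNorm τ (a * b) ≤ C := by
  refine hτ.traceNorm_le_of_forall_mul_le fun u hu h0 => ?_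
  have hle : u * (a * b) + u * (a * b) ≤ u * (a * star a) * star u + star b * b := by
    have h := star_mul_add_star_mul_le (star (u * a)) b
    rw [star_star, ← star_mul, mul_assoc u a b] at h
    nth_rewrite 2 [← h0.isSelfAdjoint.star_eq]
    simpa only [star_mul, star_star, mul_assoc] using h
  have h2 : 2 * τ (u * (a * b)) ≤ 2 * C := calc
    2 * τ (u * (a * b)) ≤ τ (u * (a * star a) * star u + star b * b) :=
      hτ.two_mul_le_of_add_self_le h0 hle
    _ = τ (u * (a * star a) * star u) + τ (star b * b) :=
      hτ.add (star_right_conjugate_nonneg (mul_star_self_nonneg a) u) (star_mul_self_nonneg b)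
    _ ≤ 2 * C := by
      rw [two_mul]
      exact add_le_add ((hτ.conj_le hu (mul_star_self_nonneg a)).trans ha) hb
  exact (ENNReal.mul_le_mul_iff_right two_ne_zero ENNReal.ofNat_ne_top).1 h2

theorem traceNorm_star (hτ : IsLscTrace τ) (z : A) : traceNorm τ (star z) = traceNorm τ z := by
  have h (z : A) : traceNorm τ (star z) ≤ traceNorm τ z := by
    obtain ⟨v, c, rfl, hc, hv, hcc⟩ := exists_mul_eq_star_mul_self_eq_abs z
    rw [star_mul]
    refine hτ.traceNorm_mul_le ?_ ?_
    · rw [star_star, hc.star_eq, hcc, traceNorm]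
    · rw [star_star, hτ.mul_star_self, hv, traceNorm]
  exact (h z).antisymm (by simpa using h (star z))

theorem exists_add_star_le (hτ : IsLscTrace τ) (z : A) :
    ∃ q : A, 0 ≤ q ∧ z + star z ≤ q ∧ τ q = 2 * traceNorm τ z := by
  obtain ⟨v, c, hz, hc, hv, hcc⟩ := exists_mul_eq_star_mul_self_eq_abs z
  refine ⟨v * star v + star c * c, add_nonneg (mul_star_self_nonneg v) (star_mul_self_nonneg c),
    ?_, ?_⟩
  · simpa [hz] using star_mul_add_star_mul_le (star v) c
  · rw [hτ.add (mul_star_self_nonneg v) (star_mul_self_nonneg c), hτ.mul_star_self, hv,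
      hc.star_eq, hcc, two_mul, traceNorm]

theorem traceNorm_add_le (hτ : IsLscTrace τ) (z w : A) :
    traceNorm τ (z + w) ≤ traceNorm τ z + traceNorm τ w := by
  refine hτ.traceNorm_le_of_forall_mul_le fun u hu h0 => ?_
  obtain ⟨p, hp0, hp, hτp⟩ := hτ.exists_add_star_le (u * z)
  obtain ⟨q, hq0, hq, hτq⟩ := hτ.exists_add_star_le (u * w)
  have hu' (x : A) : traceNorm τ (u * x) ≤ traceNorm τ x :=
    (hτ.traceNorm_mul_le_nnnorm_mul u x).trans <|
      mul_le_of_le_one_left' (by exact_mod_cast hu)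
  have hle : u * (z + w) + u * (z + w) ≤ p + q := by
    nth_rewrite 2 [← h0.isSelfAdjoint.star_eq]
    rw [mul_add, star_add, add_add_add_comm]
    exact add_le_add hp hq
  have h2 : 2 * τ (u * (z + w)) ≤ 2 * (traceNorm τ z + traceNorm τ w) := calc
    2 * τ (u * (z + w)) ≤ τ (p + q) := hτ.two_mul_le_of_add_self_le h0 hle
    _ = 2 * (traceNorm τ (u * z) + traceNorm τ (u * w)) := by
      rw [hτ.add hp0 hq0, hτp, hτq, mul_add]
    _ ≤ 2 * (traceNorm τ z + traceNorm τ w) := by gcongr <;> exact hu' _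
  exact (ENNReal.mul_le_mul_iff_right two_ne_zero ENNReal.ofNat_ne_top).1 h2

/-- The definition ideal `{z | τ(|z|) < ∞}` of a lower semicontinuous trace, as a left ideal; it is
two-sided by `IsLscTrace.mul_mem_definitionIdeal_right`. -/
def definitionIdeal (hτ : IsLscTrace τ) : Ideal A where
  carrier := {z | traceNorm τ z < ⊤}
  add_mem' hz hw := (hτ.traceNorm_add_le _ _).trans_lt (ENNReal.add_lt_top.2 ⟨hz, hw⟩)
  zero_mem' := by
    have h := hτ.smul 0 (le_refl (0 : A))
    rw [zero_smul, ENNReal.coe_zero, zero_mul] at h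
    simp [traceNorm, h]
  smul_mem' x z hz := (hτ.traceNorm_mul_le_nnnorm_mul x z).trans_lt
    (ENNReal.mul_lt_top ENNReal.coe_lt_top hz)

theorem mem_definitionIdeal (hτ : IsLscTrace τ) {z : A} :
    z ∈ hτ.definitionIdeal ↔ traceNorm τ z < ⊤ :=
  Iff.rfl

theorem mem_definitionIdeal_of_nonneg (hτ : IsLscTrace τ) {a : A} (ha : 0 ≤ a) :
    a ∈ hτ.definitionIdeal ↔ τ a < ⊤ := by
  rw [hτ.mem_definitionIdeal, traceNorm_of_nonneg τ ha]

theorem mem_definitionIdeal_of_le (hτ : IsLscTrace τ) {a b : A} (ha : 0 ≤ a) (hab : a ≤ b)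
    (hb : b ∈ hτ.definitionIdeal) : a ∈ hτ.definitionIdeal :=
  (hτ.mem_definitionIdeal_of_nonneg ha).2 <| (hτ.mono ha hab).trans_lt <|
    (hτ.mem_definitionIdeal_of_nonneg (ha.trans hab)).1 hb

theorem star_mem_definitionIdeal (hτ : IsLscTrace τ) {z : A} (hz : z ∈ hτ.definitionIdeal) :
    star z ∈ hτ.definitionIdeal :=
  (hτ.traceNorm_star z).trans_lt hz

theorem mul_mem_definitionIdeal_right (hτ : IsLscTrace τ) {z : A} (hz : z ∈ hτ.definitionIdeal)
    (x : A) : z * x ∈ hτ.definitionIdeal := by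
  simpa using hτ.star_mem_definitionIdeal
    (hτ.definitionIdeal.mul_mem_left (star x) (hτ.star_mem_definitionIdeal hz))

theorem smul_mem_definitionIdeal (hτ : IsLscTrace τ) (c : ℂ) {z : A}
    (hz : z ∈ hτ.definitionIdeal) : c • z ∈ hτ.definitionIdeal :=
  hτ.definitionIdeal.smul_of_tower_mem c hz

theorem definitionIdeal_induction (hτ : IsLscTrace τ) {p : A → Prop}
    (nonneg : ∀ a, 0 ≤ a → a ∈ hτ.definitionIdeal → p a)
    (add : ∀ z ∈ hτ.definitionIdeal, ∀ w ∈ hτ.definitionIdeal, p z → p w → p (z + w))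
    (smul : ∀ (c : ℂ), ∀ z ∈ hτ.definitionIdeal, p z → p (c • z))
    {z : A} (hz : z ∈ hτ.definitionIdeal) : p z := by
  have selfAdjoint (w : A) (hw : IsSelfAdjoint w) (hwm : w ∈ hτ.definitionIdeal) : p w := by
    have habs : CFC.abs w ∈ hτ.definitionIdeal :=
      (hτ.mem_definitionIdeal_of_nonneg (CFC.abs_nonneg w)).2 hwm
    have hle : w⁺ ≤ CFC.abs w ∧ w⁻ ≤ CFC.abs w := by
      rw [← CFC.posPart_add_negPart w]
      exact ⟨le_add_of_nonneg_right (CFC.negPart_nonneg w),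
        le_add_of_nonneg_left (CFC.posPart_nonneg w)⟩
    have hpos := hτ.mem_definitionIdeal_of_le (CFC.posPart_nonneg w) hle.1 habs
    have hneg := hτ.mem_definitionIdeal_of_le (CFC.negPart_nonneg w) hle.2 habs
    rw [← CFC.posPart_sub_negPart w, sub_eq_add_neg, ← neg_one_smul ℂ w⁻]
    exact add _ hpos _ (hτ.smul_mem_definitionIdeal _ hneg) (nonneg _ (CFC.posPart_nonneg w) hpos)
      (smul _ _ hneg (nonneg _ (CFC.negPart_nonneg w) hneg))
  have hre : (ℜ z : A) ∈ hτ.definitionIdeal := by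
    rw [realPart_apply_coe]
    exact hτ.definitionIdeal.smul_of_tower_mem _ (add_mem hz (hτ.star_mem_definitionIdeal hz))
  have him : (ℑ z : A) ∈ hτ.definitionIdeal := by
    rw [imaginaryPart_apply_coe]
    exact hτ.smul_mem_definitionIdeal _ <| hτ.definitionIdeal.smul_of_tower_mem _
      (sub_mem hz (hτ.star_mem_definitionIdeal hz))
  rw [← realPart_add_I_smul_imaginaryPart z]
  exact add _ hre _ (hτ.smul_mem_definitionIdeal _ him) (selfAdjoint _ (ℜ z).2 hre)
    (smul _ _ him (selfAdjoint _ (ℑ z).2 him))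

/-- `σ` is a linear extension of the trace `τ` to its definition ideal satisfying
`σ(xy) = σ(yx)`; the values of `σ` outside the ideal are irrelevant. -/
structure IsExtension (hτ : IsLscTrace τ) (σ : A → ℂ) : Prop where
  apply_of_nonneg {a : A} : 0 ≤ a → a ∈ hτ.definitionIdeal → σ a = ((τ a).toReal : ℂ)
  add {z w : A} : z ∈ hτ.definitionIdeal → w ∈ hτ.definitionIdeal → σ (z + w) = σ z + σ w
  smul (c : ℂ) {z : A} : z ∈ hτ.definitionIdeal → σ (c • z) = c * σ z
  mul_comm (x : A) {z : A} : z ∈ hτ.definitionIdeal → σ (x * z) = σ (z * x)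

namespace IsExtension

variable {hτ : IsLscTrace τ} {σ : A → ℂ}

theorem zero (hσ : hτ.IsExtension σ) : σ 0 = 0 := by
  simpa using hσ.smul 0 hτ.definitionIdeal.zero_mem

theorem neg (hσ : hτ.IsExtension σ) {z : A} (hz : z ∈ hτ.definitionIdeal) : σ (-z) = -σ z := by
  rw [← neg_one_smul ℂ, hσ.smul _ hz, neg_one_mul]

theorem sub (hσ : hτ.IsExtension σ) {z w : A} (hz : z ∈ hτ.definitionIdeal)
    (hw : w ∈ hτ.definitionIdeal) : σ (z - w) = σ z - σ w := by
  rw [sub_eq_add_neg, hσ.add hz (neg_mem hw), hσ.neg hw, sub_eq_add_neg]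

theorem apply_star (hσ : hτ.IsExtension σ) {z : A} (hz : z ∈ hτ.definitionIdeal) :
    σ (star z) = star (σ z) := by
  refine hτ.definitionIdeal_induction (p := fun z => σ (star z) = star (σ z))
    (fun a ha hm => ?_) (fun z hz w hw hpz hpw => ?_) (fun c z hz hpz => ?_) hz
  · rw [ha.isSelfAdjoint.star_eq, hσ.apply_of_nonneg ha hm]
    exact (Complex.conj_ofReal _).symm
  · rw [star_add, hσ.add (hτ.star_mem_definitionIdeal hz) (hτ.star_mem_definitionIdeal hw),
      hpz, hpw, hσ.add hz hw, star_add]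
  · rw [star_smul, hσ.smul _ (hτ.star_mem_definitionIdeal hz), hpz, hσ.smul c hz, star_mul']

theorem enorm_apply_le (hσ : hτ.IsExtension σ) {z : A} (hz : z ∈ hτ.definitionIdeal) :
    ‖σ z‖ₑ ≤ traceNorm τ z := by
  obtain ⟨c, hc, hcz⟩ := RCLike.exists_norm_eq_mul_self (σ z)
  have hw : c • z ∈ hτ.definitionIdeal := hτ.smul_mem_definitionIdeal c hz
  have hσw : σ (c • z) = (‖σ z‖ : ℂ) := by rw [hσ.smul c hz]; exact hcz.symm
  obtain ⟨q, hq0, hq, hτq⟩ := hτ.exists_add_star_le (c • z)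
  have hqN : τ q = 2 * traceNorm τ z := by
    rw [hτq, traceNorm, CFC.abs_smul, hc, one_smul, traceNorm]
  have hqm : q ∈ hτ.definitionIdeal := by
    rw [hτ.mem_definitionIdeal_of_nonneg hq0, hqN]
    exact ENNReal.mul_lt_top ENNReal.ofNat_lt_top hz
  have hws := hτ.star_mem_definitionIdeal hw
  have hreal : ((τ (q - (c • z + star (c • z)))).toReal : ℂ) =
      ((τ q).toReal - (‖σ z‖ + ‖σ z‖) : ℝ) := by
    rw [← hσ.apply_of_nonneg (sub_nonneg.2 hq) (sub_mem hqm (add_mem hw hws)),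
      hσ.sub hqm (add_mem hw hws), hσ.add hw hws, hσ.apply_star hw, hσw,
      hσ.apply_of_nonneg hq0 hqm]
    simp
  have hle : ‖σ z‖ + ‖σ z‖ ≤ 2 * (traceNorm τ z).toReal := by
    have h : 0 ≤ (τ q).toReal - (‖σ z‖ + ‖σ z‖) :=
      Complex.ofReal_injective hreal ▸ ENNReal.toReal_nonneg
    rwa [hqN, ENNReal.toReal_mul, ENNReal.toReal_ofNat, sub_nonneg] at h
  rw [← ofReal_norm]
  exact ENNReal.ofReal_le_of_le_toReal (by linarith)

theorem enorm_apply_mul_le (hσ : hτ.IsExtension σ) (x : A) {z : A}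
    (hz : z ∈ hτ.definitionIdeal) : ‖σ (x * z)‖ₑ ≤ ‖x‖₊ * traceNorm τ z :=
  (hσ.enorm_apply_le (hτ.definitionIdeal.mul_mem_left x hz)).trans
    (hτ.traceNorm_mul_le_nnnorm_mul x z)

end IsExtension

end IsLscTrace

end Trace

/-! ### The trace of a bounded derivation -/

theorem mem_span_unitary_commute {A : Type*} [CStarAlgebra A] {b k : A} (hb : Commute b k)
    (hb' : Commute b (star k)) :
    b ∈ Submodule.span ℂ {u : A | u ∈ unitary A ∧ Commute u k} := by
  let S := StarSubalgebra.centralizer ℂ {k}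
  have hS : IsClosed (S : Set A) := by
    rw [StarSubalgebra.coe_centralizer]
    exact Set.isClosed_centralizer _
  have hmem {x : A} : x ∈ S ↔ k * x = x * k ∧ star k * x = x * star k := by
    simp [S, StarSubalgebra.mem_centralizer_iff]
  let : CStarAlgebra S := StarSubalgebra.cstarAlgebra S (h_closed := hS)
  have htop : (⟨b, hmem.2 ⟨hb.symm, hb'.symm⟩⟩ : S) ∈ Submodule.span ℂ (unitary S : Set S) := by
    rw [CStarAlgebra.span_unitary]; trivial
  have := Submodule.mem_map_of_mem (f := S.subtype.toLinearMap) htop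
  rw [Submodule.map_span] at this
  refine Submodule.span_mono ?_ this
  rintro _ ⟨u, hu, rfl⟩
  exact ⟨Unitary.map_mem S.subtype hu, (hmem.1 u.2).1.symm⟩

theorem norm_le_one_of_mem_unitary {A : Type*} [CStarAlgebra A] {u : A} (hu : u ∈ unitary A) :
    ‖u‖ ≤ 1 := by
  nontriviality A
  exact (CStarRing.norm_of_mem_unitary hu).le

/-- The Leibniz rule; a linear map satisfying it is a derivation. Mathlib's `Derivation` is
restricted to commutative algebras. -/
def IsLeibniz {A : Type*} [Mul A] [Add A] (D : A → A) : Prop :=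
  ∀ x y, D (x * y) = D x * y + x * D y

section Derivation

variable {A : Type*} [CStarAlgebra A] [PartialOrder A] [StarOrderedRing A] {τ : A → ℝ≥0∞}

namespace IsLscTrace.IsExtension

variable {hτ : IsLscTrace τ} {σ : A → ℂ} {D : A →L[ℂ] A}

theorem apply_star_mul_mul_unitary (hσ : hτ.IsExtension σ) {z u : A}
    (hz : z ∈ hτ.definitionIdeal) (hu : u ∈ unitary A) : σ (star u * (z * u)) = σ z := by
  rw [hσ.mul_comm _ (hτ.mul_mem_definitionIdeal_right hz _), mul_assoc, hu.2, mul_one]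

theorem apply_star_pow_mul_map_pow_mul (hσ : hτ.IsExtension σ) {D : A → A} (hD : IsLeibniz D)
    {k u : A} (hk : k ∈ hτ.definitionIdeal) (hu : u ∈ unitary A) (huk : Commute u k) (n : ℕ) :
    σ (star (u ^ (n + 1)) * D (u ^ (n + 1)) * k) = (n + 1) * σ (star u * D u * k) := by
  induction n with
  | zero => simp
  | succ n ih =>
    have hm := hτ.definitionIdeal.mul_mem_left (star (u ^ (n + 1)) * D (u ^ (n + 1))) hk
    have hsum : star (u ^ (n + 1 + 1)) * D (u ^ (n + 1 + 1)) * k =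
        star u * (star (u ^ (n + 1)) * D (u ^ (n + 1)) * k * u) + star u * D u * k := calc
      _ = star u * (star (u ^ (n + 1)) * D (u ^ (n + 1)) * (u * k)) +
          star u * (star (u ^ (n + 1)) * u ^ (n + 1)) * D u * k := by
        rw [pow_succ _ (n + 1), hD, star_mul]; noncomm_ring
      _ = _ := by rw [(pow_mem hu (n + 1)).1, huk.eq]; noncomm_ring
    rw [hsum, hσ.add (hτ.definitionIdeal.mul_mem_left _ (hτ.mul_mem_definitionIdeal_right hm _))
      (hτ.definitionIdeal.mul_mem_left _ hk), hσ.apply_star_mul_mul_unitary hm hu, ih]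
    push_cast
    ring

theorem apply_star_mul_map_mul_eq_zero (hσ : hτ.IsExtension σ) (hD : IsLeibniz D) {k u : A}
    (hk : k ∈ hτ.definitionIdeal) (hu : u ∈ unitary A) (huk : Commute u k) :
    σ (star u * D u * k) = 0 := by
  have hbound (n : ℕ) : ‖star (u ^ n) * D (u ^ n)‖ ≤ ‖D‖ := by
    have hn := norm_le_one_of_mem_unitary (pow_mem hu n)
    calc ‖star (u ^ n) * D (u ^ n)‖ ≤ ‖star (u ^ n)‖ * (‖D‖ * ‖u ^ n‖) :=
          (norm_mul_le _ _).trans (by gcongr; exact D.le_opNorm _)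
      _ ≤ 1 * (‖D‖ * 1) := by rw [norm_star]; gcongr
      _ = ‖D‖ := by ring
  have hgrowth (n : ℕ) : (n + 1) * ‖σ (star u * D u * k)‖ ≤ ‖D‖ * (traceNorm τ k).toReal := by
    have h := ENNReal.toReal_mono (ENNReal.mul_lt_top ENNReal.coe_lt_top hk).ne <|
      hσ.enorm_apply_mul_le (star (u ^ (n + 1)) * D (u ^ (n + 1))) hk
    rw [hσ.apply_star_pow_mul_map_pow_mul hD hk hu huk, toReal_enorm, ENNReal.toReal_mul,
      norm_mul, ← Nat.cast_succ, Complex.norm_natCast, Nat.cast_succ] at h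
    exact h.trans (mul_le_mul_of_nonneg_right (hbound _) ENNReal.toReal_nonneg)
  by_contra hne
  obtain ⟨n, hn⟩ := Archimedean.arch (‖D‖ * (traceNorm τ k).toReal) (norm_pos_iff.2 hne)
  have := hgrowth n
  rw [nsmul_eq_mul] at hn
  linarith [norm_pos_iff.2 hne]

theorem apply_map_unitary_mul_eq_zero (hσ : hτ.IsExtension σ) (hD : IsLeibniz D) {k u : A}
    (hk : k ∈ hτ.definitionIdeal) (hu : u ∈ unitary A) (huk : Commute u k) :
    σ (D u * k) = 0 := by
  have h := hσ.apply_star_mul_map_mul_eq_zero hD (hτ.definitionIdeal.mul_mem_left u hk) hu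
    ((Commute.refl _).mul_right huk)
  rwa [huk.eq, mul_assoc, ← mul_assoc (D u), hσ.apply_star_mul_mul_unitary
    (hτ.definitionIdeal.mul_mem_left _ hk) hu] at h

theorem apply_map_mul_eq_zero (hσ : hτ.IsExtension σ) (hD : IsLeibniz D) {b k : A}
    (hk : k ∈ hτ.definitionIdeal) (hbk : Commute b k) (hbk' : Commute b (star k)) :
    σ (D b * k) = 0 := by
  have hm (x : A) : x * k ∈ hτ.definitionIdeal := hτ.definitionIdeal.mul_mem_left x hk
  have hb := mem_span_unitary_commute hbk hbk'
  clear hbk hbk'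
  induction hb using Submodule.span_induction with
  | mem u hu => exact hσ.apply_map_unitary_mul_eq_zero hD hk hu.1 hu.2
  | zero => rw [map_zero, zero_mul, hσ.zero]
  | add x y _ _ hx hy => rw [map_add, add_mul, hσ.add (hm _) (hm _), hx, hy, add_zero]
  | smul c x _ hx => rw [map_smul, smul_mul_assoc, hσ.smul c (hm _), hx, mul_zero]

theorem map_mem_and_apply_map_eq_zero (hσ : hτ.IsExtension σ) (hD : IsLeibniz D) {b k : A}
    (hk : k ∈ hτ.definitionIdeal) (hks : IsSelfAdjoint k) (hkb : k * b = b) (hbk : b * k = b) :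
    D b ∈ hτ.definitionIdeal ∧ σ (D b) = 0 := by
  have hb : b ∈ hτ.definitionIdeal := hbk ▸ hτ.definitionIdeal.mul_mem_left b hk
  have hcomm : Commute b k := hbk.trans hkb.symm
  have hcomm' : Commute k (star b) := by
    simpa only [hks.star_eq] using hcomm.star_star.symm
  have h1 : D b * k ∈ hτ.definitionIdeal := hτ.definitionIdeal.mul_mem_left _ hk
  have h2 : b * D k ∈ hτ.definitionIdeal := hτ.mul_mem_definitionIdeal_right hb _
  have hDb : D b = D b * k + b * D k := by rw [← hD, hbk]
  rw [hDb]
  refine ⟨add_mem h1 h2, ?_⟩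
  rw [hσ.add h1 h2, hσ.apply_map_mul_eq_zero hD hk hcomm (by rwa [hks.star_eq]),
    ← hσ.mul_comm _ hb, hσ.apply_map_mul_eq_zero hD hb hcomm.symm hcomm', add_zero]

/-- Traciality turns `u * (s * s)` into `s * (u * s)`, on which `k` acts as a unit. -/
theorem apply_map_mul_mul_self_eq_zero (hσ : hτ.IsExtension σ) (hD : IsLeibniz D) {s k : A}
    (hk : k ∈ hτ.definitionIdeal) (hks : IsSelfAdjoint k) (hkss : k * s = s) (hsk : s * k = s)
    (u : A) : σ (D (u * (s * s))) = 0 := by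
  have hs : s ∈ hτ.definitionIdeal := hsk ▸ hτ.definitionIdeal.mul_mem_left s hk
  have hus : u * s ∈ hτ.definitionIdeal := hτ.definitionIdeal.mul_mem_left u hs
  calc σ (D (u * (s * s))) = σ (D (u * s) * s) + σ (u * s * D s) := by
        rw [← mul_assoc, hD, hσ.add (hτ.definitionIdeal.mul_mem_left _ hs)
          (hτ.mul_mem_definitionIdeal_right hus _)]
    _ = σ (D s * (u * s)) + σ (s * D (u * s)) := by
        rw [hσ.mul_comm _ hs, hσ.mul_comm _ hus, add_comm]
    _ = σ (D (s * (u * s))) := by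
        rw [hD s, hσ.add (hτ.definitionIdeal.mul_mem_left _ hus)
          (hτ.mul_mem_definitionIdeal_right hs _)]
    _ = 0 := (hσ.map_mem_and_apply_map_eq_zero hD hk hks (by rw [← mul_assoc, hkss])
        (by rw [mul_assoc, mul_assoc, hsk])).2

theorem map_softThreshold (hσ : hτ.IsExtension σ) (hD : IsLeibniz D) {y : A} (hy : 0 ≤ y)
    (hym : y ∈ hτ.definitionIdeal) {ε : ℝ} (hε : 0 < ε) :
    D (softThreshold ε y) ∈ hτ.definitionIdeal ∧ σ (D (softThreshold ε y)) = 0 ∧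
      ∀ u, σ (D (u * softThreshold ε y)) = 0 := by
  obtain ⟨s, k, hs, hk0, hky, hsk, hss⟩ := exists_softThreshold_eq_mul_self hε hy
  have hk : k ∈ hτ.definitionIdeal := hτ.mem_definitionIdeal_of_le hk0 hky <|
    hτ.definitionIdeal.smul_of_tower_mem _ hym
  have hkss : k * s = s := by
    simpa only [star_mul, hs.star_eq, hk0.isSelfAdjoint.star_eq] using congrArg star hsk
  rw [← hss]
  obtain ⟨hmem, hzero⟩ := hσ.map_mem_and_apply_map_eq_zero hD hk hk0.isSelfAdjoint
    (b := s * s) (by rw [← mul_assoc, hkss]) (by rw [mul_assoc, hsk])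
  exact ⟨hmem, hzero, hσ.apply_map_mul_mul_self_eq_zero hD hk hk0.isSelfAdjoint hkss hsk⟩

theorem traceNorm_map_softThreshold_le (hσ : hτ.IsExtension σ) (hD : IsLeibniz D) {y : A}
    (hy : 0 ≤ y) (hym : y ∈ hτ.definitionIdeal) {ε : ℝ} (hε : 0 < ε) :
    traceNorm τ (D (softThreshold ε y)) ≤ ‖D‖₊ * τ y := by
  obtain ⟨hDp, -, hzero⟩ := hσ.map_softThreshold hD hy hym hε
  set p := softThreshold ε y
  have hp0 : 0 ≤ p := softThreshold_nonneg ε y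
  have hpy : p ≤ y := softThreshold_le hε.le hy
  have hp : p ∈ hτ.definitionIdeal := hτ.mem_definitionIdeal_of_le hp0 hpy hym
  refine hτ.traceNorm_le_of_forall_mul_le fun u hu h0 => ?_
  have hupm := hτ.definitionIdeal.mul_mem_left (D u) hp
  have hum := hτ.definitionIdeal.mul_mem_left u hDp
  have hmove : σ (u * D p) = -σ (D u * p) := by
    have h := hzero u
    rw [hD, hσ.add hupm hum] at h
    exact eq_neg_of_add_eq_zero_right h
  have hDu : ‖D u‖₊ ≤ ‖D‖₊ := (D.le_opNorm u).trans (mul_le_of_le_one_right (norm_nonneg D) hu)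
  calc τ (u * D p) = ‖σ (u * D p)‖ₑ := by
        rw [hσ.apply_of_nonneg h0 hum, ← ofReal_norm, Complex.norm_real,
          Real.norm_of_nonneg ENNReal.toReal_nonneg,
          ENNReal.ofReal_toReal ((hτ.mem_definitionIdeal_of_nonneg h0).1 hum).ne]
    _ = ‖σ (D u * p)‖ₑ := by rw [hmove, enorm_neg]
    _ ≤ ‖D u‖₊ * τ p := by
        rw [← traceNorm_of_nonneg τ hp0]; exact hσ.enorm_apply_mul_le _ hp
    _ ≤ ‖D‖₊ * τ y := by gcongr; exact hτ.mono hp0 hpy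

theorem traceNorm_map_le (hσ : hτ.IsExtension σ) (hD : IsLeibniz D) {y : A} (hy : 0 ≤ y)
    (hym : y ∈ hτ.definitionIdeal) : traceNorm τ (D y) ≤ ‖D‖₊ * τ y :=
  hτ.traceNorm_le_of_tendsto
    (fun _ => hσ.traceNorm_map_softThreshold_le hD hy hym Nat.one_div_pos_of_nat)
    ((D.continuous.tendsto y).comp (tendsto_softThreshold hy))

theorem map_mem_of_nonneg (hσ : hτ.IsExtension σ) (hD : IsLeibniz D) {y : A} (hy : 0 ≤ y)
    (hym : y ∈ hτ.definitionIdeal) : D y ∈ hτ.definitionIdeal :=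
  (hσ.traceNorm_map_le hD hy hym).trans_lt <|
    ENNReal.mul_lt_top ENNReal.coe_lt_top ((hτ.mem_definitionIdeal_of_nonneg hy).1 hym)

theorem apply_map_of_nonneg (hσ : hτ.IsExtension σ) (hD : IsLeibniz D) {y : A} (hy : 0 ≤ y)
    (hym : y ∈ hτ.definitionIdeal) : σ (D y) = 0 := by
  have hle (n : ℕ) : ‖σ (D y)‖ₑ ≤ ‖D‖₊ * τ (y - softThreshold (1 / (n + 1)) y) := by
    have hε : (0 : ℝ) < 1 / (n + 1) := Nat.one_div_pos_of_nat
    obtain ⟨hDp, hzero, -⟩ := hσ.map_softThreshold hD hy hym hε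
    set p := softThreshold (1 / (n + 1)) y
    have hr0 : 0 ≤ y - p := sub_nonneg.2 (softThreshold_le hε.le hy)
    have hr : y - p ∈ hτ.definitionIdeal :=
      hτ.mem_definitionIdeal_of_le hr0 (sub_le_self y (softThreshold_nonneg _ y)) hym
    calc ‖σ (D y)‖ₑ = ‖σ (D (y - p))‖ₑ := by
          rw [map_sub, hσ.sub (hσ.map_mem_of_nonneg hD hy hym) hDp, hzero, sub_zero]
      _ ≤ traceNorm τ (D (y - p)) := hσ.enorm_apply_le (hσ.map_mem_of_nonneg hD hr0 hr)
      _ ≤ ‖D‖₊ * τ (y - p) := hσ.traceNorm_map_le hD hr0 hr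
  have hlim := ENNReal.Tendsto.const_mul (a := ‖D‖₊)
    (hτ.tendsto_sub_softThreshold hy ((hτ.mem_definitionIdeal_of_nonneg hy).1 hym))
    (Or.inr ENNReal.coe_ne_top)
  rw [mul_zero] at hlim
  exact enorm_eq_zero.1 (le_zero_iff.1 (ge_of_tendsto' hlim hle))

theorem map_mem_and_apply_map (hσ : hτ.IsExtension σ) (hD : IsLeibniz D) {z : A}
    (hz : z ∈ hτ.definitionIdeal) : D z ∈ hτ.definitionIdeal ∧ σ (D z) = 0 := by
  refine hτ.definitionIdeal_induction (p := fun z => D z ∈ hτ.definitionIdeal ∧ σ (D z) = 0)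
    (fun y hy hym => ⟨hσ.map_mem_of_nonneg hD hy hym, hσ.apply_map_of_nonneg hD hy hym⟩)
    (fun z _ w _ hz hw => ?_) (fun c z _ hz => ?_) hz
  · rw [map_add]
    exact ⟨add_mem hz.1 hw.1, by rw [hσ.add hz.1 hw.1, hz.2, hw.2, add_zero]⟩
  · rw [map_smul]
    exact ⟨hτ.smul_mem_definitionIdeal c hz.1, by rw [hσ.smul c hz.1, hz.2, mul_zero]⟩

theorem apply_map_mul (hσ : hτ.IsExtension σ) (hD : IsLeibniz D) (x : A) {y : A}
    (hy : y ∈ hτ.definitionIdeal) : σ (D x * y) = -σ (x * D y) := by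
  have h := (hσ.map_mem_and_apply_map hD (hτ.definitionIdeal.mul_mem_left x hy)).2
  rw [hD, hσ.add (hτ.definitionIdeal.mul_mem_left _ hy)
    (hτ.definitionIdeal.mul_mem_left _ (hσ.map_mem_and_apply_map hD hy).1)] at h
  exact eq_neg_of_add_eq_zero_left h

end IsLscTrace.IsExtension

end Derivation

/-! ### Automatic continuity of derivations -/

/-- If `u n → 0` and `T (u n) → z`, dissipativity at `-z + l⁻¹ • u n` gives `‖z‖ ≤ l * ‖T z‖` in the
limit, for every `l > 0`. -/
theorem continuous_of_norm_le_norm_add_smul {E : Type*} [NormedAddCommGroup E] [NormedSpace ℝ E]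
    [CompleteSpace E] (T : E →ₗ[ℝ] E) (hT : ∀ l : ℝ, 0 < l → ∀ x, ‖x‖ ≤ ‖x + l • T x‖) :
    Continuous T := by
  refine T.continuous_of_seq_closed_graph fun u x y hu hy => ?_
  set z := y - T x
  have hu0 : Tendsto (fun n => u n - x) atTop (𝓝 0) := by simpa using hu.sub_const x
  have hTu : Tendsto (fun n => T (u n - x)) atTop (𝓝 z) := by
    simpa only [map_sub, Function.comp_def] using hy.sub_const (T x)
  have hle (l : ℝ) (hl : 0 < l) : ‖z‖ ≤ l * ‖T z‖ := by
    have hdiss (n : ℕ) : ‖-z + l⁻¹ • (u n - x)‖ ≤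
        ‖-z + l⁻¹ • (u n - x) + (-(l • T z) + T (u n - x))‖ := by
      have h := hT l hl (-z + l⁻¹ • (u n - x))
      rwa [map_add, map_neg, map_smul, smul_add, smul_neg, smul_inv_smul₀ hl.ne'] at h
    have hlim := tendsto_const_nhds (x := -z).add (hu0.const_smul l⁻¹)
    have h := le_of_tendsto_of_tendsto' hlim.norm
      (hlim.add (tendsto_const_nhds.add hTu)).norm hdiss
    rwa [smul_zero, add_zero, norm_neg, neg_add_cancel_comm_assoc, norm_neg, norm_smul,
      Real.norm_of_nonneg hl.le] at h
  have hlim : Tendsto (fun l : ℝ => l * ‖T z‖) (𝓝[>] 0) (𝓝 0) := by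
    have h : Tendsto (fun l : ℝ => l * ‖T z‖) (𝓝 0) (𝓝 (0 * ‖T z‖)) := tendsto_id.mul_const _
    rw [zero_mul] at h
    exact h.mono_left nhdsWithin_le_nhds
  have hz : ‖z‖ ≤ 0 := ge_of_tendsto hlim (eventually_mem_nhdsWithin.mono hle)
  exact sub_eq_zero.1 (norm_le_zero_iff.1 hz)

theorem mul_add_mul_le_of_isSelfAdjoint {A : Type*} [CStarAlgebra A] [PartialOrder A]
    [StarOrderedRing A] {c e : A} (hc : IsSelfAdjoint c) (he : IsSelfAdjoint e)
    {t : ℝ} (ht : 0 < t) :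
    e * c + c * e ≤ t • (c * c) + algebraMap ℝ A (‖e‖ ^ 2 / t) := by
  have hsq : e * e ≤ algebraMap ℝ A (‖e‖ ^ 2) := by
    simpa only [he.star_eq] using CStarAlgebra.star_mul_le_algebraMap_norm_sq (a := e)
  have hmul : Real.sqrt t * Real.sqrt t = t := Real.mul_self_sqrt ht.le
  have hne : Real.sqrt t ≠ 0 := (Real.sqrt_pos.2 ht).ne'
  calc e * c + c * e = star (Real.sqrt t • c) * ((Real.sqrt t)⁻¹ • e) +
        star ((Real.sqrt t)⁻¹ • e) * (Real.sqrt t • c) := by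
        simp [hc.star_eq, he.star_eq, smul_smul, hne, add_comm]
    _ ≤ t • (c * c) + t⁻¹ • (e * e) := by
        refine (star_mul_add_star_mul_le _ _).trans_eq ?_
        simp [hc.star_eq, he.star_eq, smul_smul, ← mul_inv, hmul]
    _ ≤ t • (c * c) + t⁻¹ • algebraMap ℝ A (‖e‖ ^ 2) := by gcongr
    _ = _ := by rw [div_eq_inv_mul, map_mul, ← Algebra.smul_def]

section Jordan

variable {A : Type*} [CStarAlgebra A]

/-- The Jordan form of the Leibniz rule, `T(c²) = T(c)c + cT(c)`, for maps of the selfadjoint part.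
Unlike derivations, these maps include the real and imaginary parts of a derivation. -/
def IsJordanLeibniz (T : selfAdjoint A → selfAdjoint A) : Prop :=
  ∀ c, (T (c ^ 2) : A) = T c * c + c * T c

theorem IsJordanLeibniz.map_one {T : selfAdjoint A → selfAdjoint A} (hT : IsJordanLeibniz T) :
    T 1 = 0 := by
  have h := hT 1
  rw [show (1 : selfAdjoint A) ^ 2 = 1 from Subtype.ext (one_pow 2), selfAdjoint.val_one, mul_one,
    one_mul, left_eq_add] at h
  exact Subtype.ext h

/-- With `h = ‖x‖ - x = c²`, the bound `x + T x ≤ r < ‖x‖` reads `‖x‖ - r ≤ h + T h`, while the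
cross terms of `T h = (T c)c + c(T c)` are dominated by a multiple of `h` plus an arbitrarily small
constant; hence `h` is bounded below. -/
theorem norm_notMem_spectrum_of_norm_add_lt {T : selfAdjoint A →ₗ[ℝ] selfAdjoint A}
    (hT : IsJordanLeibniz T) {x : selfAdjoint A} (hx : ‖x + T x‖ < ‖x‖) :
    ‖x‖ ∉ spectrum ℝ (x : A) := by
  let := CStarAlgebra.spectralOrder A
  have := CStarAlgebra.spectralOrderedRing A
  set r := ‖x + T x‖
  set n := ‖x‖
  set h : selfAdjoint A := n • 1 - x
  have hcoe : (h : A) = algebraMap ℝ A n - x := by simp [h, Algebra.algebraMap_eq_smul_one]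
  have h0 : 0 ≤ (h : A) := by
    rw [hcoe, sub_nonneg]; exact x.2.le_algebraMap_norm_self
  let c : selfAdjoint A := ⟨CFC.sqrt (h : A), (CFC.sqrt_nonneg _).isSelfAdjoint⟩
  have hcc : (c * c : A) = h := CFC.sqrt_mul_sqrt_self _ h0
  have hTh : (T c * c + c * T c : A) = -T x := by
    rw [← hT c, show c ^ 2 = h from Subtype.ext <| by simpa [sq] using hcc]
    simp [h, hT.map_one]
  obtain ⟨t, ht, htd⟩ : ∃ t : ℝ, 0 < t ∧ ‖(T c : A)‖ ^ 2 / t ≤ (n - r) / 2 := by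
    have hd : 0 < (n - r) / 2 := by linarith
    refine ⟨(‖(T c : A)‖ ^ 2 + 1) / ((n - r) / 2), div_pos (by positivity) hd, ?_⟩
    rw [div_div_eq_mul_div, div_le_iff₀ (by positivity)]
    nlinarith
  have hlow : ((n - r) / 2 / (1 + t)) • (1 : A) ≤ h := by
    have hcross := (mul_add_mul_le_of_isSelfAdjoint c.2 (T c).2 ht).trans
      (add_le_add_right (algebraMap_mono A htd) _)
    have hupper : (x + T x : A) ≤ algebraMap ℝ A r := (x + T x).2.le_algebraMap_norm_self
    have hsum : 0 ≤ (1 + t) • (h : A) - ((n - r) / 2) • (1 : A) := by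
      rw [hTh, hcc] at hcross
      convert sub_nonneg.2 (add_le_add hcross hupper) using 1
      simp only [hcoe, Algebra.algebraMap_eq_smul_one]
      module
    rw [div_eq_inv_mul, mul_smul, inv_smul_le_iff_of_pos (by positivity)]
    exact sub_nonneg.1 hsum
  rw [spectrum.notMem_iff, ← hcoe]
  exact CStarAlgebra.isUnit_of_le _ hlow <|
    isStrictlyPositive_one.smul (div_pos (by linarith) (by positivity))

theorem norm_le_norm_add_of_isJordanLeibniz {T : selfAdjoint A →ₗ[ℝ] selfAdjoint A}
    (hT : IsJordanLeibniz T) (x : selfAdjoint A) : ‖x‖ ≤ ‖x + T x‖ := by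
  nontriviality A
  by_contra! hx
  rcases CStarAlgebra.norm_or_neg_norm_mem_spectrum x.2 with h | h
  · exact norm_notMem_spectrum_of_norm_add_lt hT hx h
  · refine norm_notMem_spectrum_of_norm_add_lt hT (x := -x) ?_ ?_
    · rwa [map_neg, ← neg_add, norm_neg, norm_neg]
    · rwa [norm_neg, NegMemClass.coe_neg, ← spectrum.neg_eq, Set.mem_neg]

theorem continuous_of_isJordanLeibniz {T : selfAdjoint A →ₗ[ℝ] selfAdjoint A}
    (hT : IsJordanLeibniz T) : Continuous T := by
  have : CompleteSpace (selfAdjoint A) :=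
    (isClosed_eq continuous_star continuous_id).completeSpace_coe
  refine continuous_of_norm_le_norm_add_smul T fun l _ x => ?_
  refine norm_le_norm_add_of_isJordanLeibniz (T := l • T) (fun c => ?_) x
  simp [hT c]

/-- The real part of a derivation, as a map of the selfadjoint part. -/
noncomputable def realPartMap (D : A →ₗ[ℂ] A) : selfAdjoint A →ₗ[ℝ] selfAdjoint A :=
  realPart ∘ₗ D.restrictScalars ℝ ∘ₗ (selfAdjoint.submodule ℝ A).subtype

theorem isJordanLeibniz_realPartMap {D : A →ₗ[ℂ] A} (hD : IsLeibniz D) :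
    IsJordanLeibniz (realPartMap D) := by
  intro c
  change (ℜ (D (c ^ 2 : A)) : A) = ℜ (D c) * c + c * ℜ (D c)
  rw [pow_two, hD]
  simp only [realPart_apply_coe, star_add, star_mul, c.2.star_eq, smul_mul_assoc, mul_smul_comm,
    ← smul_add, add_mul, mul_add]
  congr 1
  abel

theorem continuous_of_isLeibniz {D : A →ₗ[ℂ] A} (hD : IsLeibniz D) : Continuous D := by
  have hre : Continuous fun c : selfAdjoint A => ℜ (D c) :=
    continuous_of_isJordanLeibniz (isJordanLeibniz_realPartMap hD)
  have him : Continuous fun c : selfAdjoint A => ℑ (D c) := by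
    have hD' : IsLeibniz (-Complex.I • D) := fun x y => by
      simp only [LinearMap.smul_apply, hD x y, smul_add, smul_mul_assoc, mul_smul_comm]
    convert continuous_of_isJordanLeibniz (isJordanLeibniz_realPartMap hD') using 2 with c
    change ℑ (D c) = ℜ (-Complex.I • D c)
    rw [neg_smul, map_neg, realPart_I_smul, neg_neg]
  have hsa : Continuous fun c : selfAdjoint A => D c :=
    ((continuous_subtype_val.comp hre).add
      ((continuous_subtype_val.comp him).const_smul Complex.I)).congr fun c =>
        realPart_add_I_smul_imaginaryPart (D c)
  have hrealPart : Continuous (realPart (A := A)) :=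
    AddMonoidHomClass.continuous_of_bound realPart 1 fun x => by
      simpa only [one_mul] using realPart.norm_le x
  have himaginaryPart : Continuous (imaginaryPart (A := A)) :=
    AddMonoidHomClass.continuous_of_bound imaginaryPart 1 fun x => by
      simpa only [one_mul] using imaginaryPart.norm_le x
  refine ((hsa.comp hrealPart).add ((hsa.comp himaginaryPart).const_smul Complex.I)).congr
    fun x => ?_
  change D (ℜ x) + Complex.I • D (ℑ x) = D x
  rw [← map_smul, ← map_add, realPart_add_I_smul_imaginaryPart]

end Jordan

/-! ### Two-local derivations -/

section VonNeumannAlgebra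

variable {M : VonNeumannAlgebra H}

theorem isClosed_vonNeumannAlgebra (M : VonNeumannAlgebra H) : IsClosed (M : Set (H →L[ℂ] H)) := by
  rw [← M.centralizer_centralizer]
  exact Set.isClosed_centralizer _

noncomputable instance : CStarAlgebra M :=
  StarSubalgebra.cstarAlgebra M (h_closed := isClosed_vonNeumannAlgebra M)

theorem isPos_iff_nonneg {x : M} : IsPos M x ↔ 0 ≤ x :=
  (ContinuousLinearMap.nonneg_iff_isPositive (x : H →L[ℂ] H)).symm

theorem exists_star_mul_self_of_isPos {x : M} (hx : IsPos M x) : ∃ y : M, x = star y * y := by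
  have hsa : IsSelfAdjoint x := Subtype.ext hx.isSelfAdjoint
  let inclusion : M →⋆ₐ[ℂ] (H →L[ℂ] H) := M.toStarSubalgebra.subtype
  have hspec : spectrum ℝ (x : H →L[ℂ] H) = spectrum ℝ x :=
    hsa.map_spectrum_real inclusion Subtype.val_injective
  have hres : SpectrumRestricts x ContinuousMap.realToNNReal := by
    rw [SpectrumRestricts.nnreal_iff, ← hspec, ← SpectrumRestricts.nnreal_iff]
    exact ContinuousLinearMap.IsPositive.spectrumRestricts hx
  obtain ⟨y, hy, -, hyy⟩ := CFC.exists_sqrt_of_isSelfAdjoint_of_quasispectrumRestricts hsa hres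
  exact ⟨y, by rw [hy.star_eq, hyy]⟩

instance : StarOrderedRing M :=
  StarOrderedRing.of_nonneg_iff'
    (fun {x y} hxy z => show (z : H →L[ℂ] H) + x ≤ z + y from add_le_add_right hxy _)
    fun x => ⟨fun hx => exists_star_mul_self_of_isPos (isPos_iff_nonneg.2 hx), by
      rintro ⟨y, rfl⟩
      exact star_mul_self_nonneg (y : H →L[ℂ] H)⟩

theorem FNSTrace.isLscTrace (T : FNSTrace M) : IsLscTrace T.τ where
  add hx hy := T.additive _ _ (isPos_iff_nonneg.2 hx) (isPos_iff_nonneg.2 hy)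
  smul c _ hx := T.pos_smul c _ (isPos_iff_nonneg.2 hx)
  mul_star_self := T.tracial
  eq_iSup_of_tendsto {f a} hf hmono hlim :=
    T.normal f a (fun i => isPos_iff_nonneg.2 (hf i)) (fun _ _ hij => hmono hij)
      (fun i => hmono.ge_of_tendsto hlim i) fun _ hu => le_of_tendsto' hlim hu

theorem memIdeal_iff_mem_definitionIdeal {T : FNSTrace M} {a : M} :
    MemIdeal M T.τ a ↔ a ∈ T.isLscTrace.definitionIdeal := by
  constructor
  · rintro ⟨b, hb, hbb, hτb⟩
    have habs : CFC.abs a = b := CFC.sqrt_unique hbb (isPos_iff_nonneg.1 hb)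
    rwa [IsLscTrace.mem_definitionIdeal, traceNorm, habs]
  · exact fun h => ⟨CFC.abs a, isPos_iff_nonneg.2 (CFC.abs_nonneg a), CFC.abs_mul_abs a, h⟩

theorem IsTraceExtension.isExtension {T : FNSTrace M} {σ : M → ℂ}
    (hσ : IsTraceExtension M T σ) :
    T.isLscTrace.IsExtension σ := by
  simp only [IsTraceExtension, memIdeal_iff_mem_definitionIdeal] at hσ
  obtain ⟨hpos, hadd, hsmul, hcomm⟩ := hσ
  exact ⟨fun h hm => hpos _ (isPos_iff_nonneg.2 h)
    ((T.isLscTrace.mem_definitionIdeal_of_nonneg h).1 hm), hadd _ _, fun c _ => hsmul c _,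
    fun x _ => hcomm x _⟩

theorem Is2LocalDerivation.exists_linearMap {Δ : M → M} (hΔ : Is2LocalDerivation M Δ) (x y : M) :
    ∃ D : M →ₗ[ℂ] M, IsLeibniz D ∧ Δ x = D x ∧ Δ y = D y := by
  obtain ⟨D, ⟨hadd, hsmul, hmul⟩, hxy⟩ := hΔ x y
  exact ⟨{ toFun := D, map_add' := hadd, map_smul' := hsmul }, hmul, hxy⟩

end VonNeumannAlgebra

theorem twoLocalDerivation_trace_identity_general {A : Type*} [CStarAlgebra A] [PartialOrder A]
    [StarOrderedRing A] {τ : A → ℝ≥0∞} (hτ : IsLscTrace τ) {σ : A → ℂ} (hσ : hτ.IsExtension σ)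
    {Δ : A → A} (hΔ : ∀ x y, ∃ D : A →ₗ[ℂ] A, IsLeibniz D ∧ Δ x = D x ∧ Δ y = D y)
    (x : A) {y : A} (hy : y ∈ hτ.definitionIdeal) : σ (Δ x * y) = -σ (x * Δ y) := by
  obtain ⟨D, hD, hx, hy'⟩ := hΔ x y
  rw [hx, hy']
  exact hσ.apply_map_mul (D := ⟨D, continuous_of_isLeibniz hD⟩) hD x hy

/-- For a 2-local derivation `Δ` on a von Neumann algebra with faithful normal semifinite
trace `τ`, one has `τ(Δ(x)y) = -τ(xΔ(y))` for all `x ∈ M` and `y ∈ m_τ`. -/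
theorem twoLocalDerivation_trace_identity
    (M : VonNeumannAlgebra H) (T : FNSTrace M) (σ : M → ℂ)
    (hσ : IsTraceExtension M T σ)
    (Δ : M → M) (hΔ : Is2LocalDerivation M Δ)
    (x y : M) (hy : MemIdeal M T.τ y) :
    σ (Δ x * y) = - σ (x * Δ y) := by
  exact twoLocalDerivation_trace_identity_general T.isLscTrace hσ.isExtension hΔ.exists_linearMap x
    (memIdeal_iff_mem_definitionIdeal.1 hy)
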